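/- Let w > 1/4 and let y be a real number with -1 ≤ y < 1. Then ∑_{l=0}^∞ (2l+1)·P_l(y)/(l(l+1)+w) > 0; equivalently, the Green's function G = -(1/4π)·∑_{l=0}^∞ (2l+1)P_l(y)/(l(l+1)+w) of the screened Poisson equation on the sphere is strictly negative for every angular separation γ with 0 < γ ≤ π. -/

import Mathlib

open Filter Topology

/-- The Legendre polynomials `P l` on `ℝ`, i.e. the orthogonal polynomials on `[-1,1]`
normalized by `P l 1 = 1`, defined via the Bonnet recurrence
`P 0 y = 1`, `P 1 y = y`, `(n+2) • P (n+2) y = (2n+3) y P (n+1) y - (n+1) P n y`. -/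
noncomputable def legendreP : ℕ → ℝ → ℝ
  | 0, _ => 1
  | 1, y => y
  | (n + 2), y =>
      ((2 * (n : ℝ) + 3) * y * legendreP (n + 1) y - ((n : ℝ) + 1) * legendreP n y) / ((n : ℝ) + 2)

/-- Summation weights `n! (n+1)! / ((n-l)! (n+l+1)!)`. -/
noncomputable def rhoW (n : ℕ) : ℕ → ℝ
  | 0 => 1
  | (l + 1) => rhoW n l * ((n : ℝ) - l) / ((n : ℝ) + l + 2)

/-- The normalizing constants. -/
noncomputable def dW (w : ℝ) : ℕ → ℝ
  | 0 => w
  | (n + 1) => dW w n * (1 + w / (((n : ℝ) + 1) * ((n : ℝ) + 2)))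

lemma rhoW_succ (n l : ℕ) :
    rhoW n (l + 1) * ((n : ℝ) + l + 2) = rhoW n l * ((n : ℝ) - l) := by
  have : ((n : ℝ) + l + 2) ≠ 0 := by positivity
  rw [rhoW]; field_simp

lemma rhoW_zero_of (n l : ℕ) : rhoW n (n + 1 + l) = 0 := by
  induction l with
  | zero => simp [rhoW]
  | succ l ih => rw [← add_assoc, rhoW, ih]; simp

lemma rhoW_nonneg (n l : ℕ) : 0 ≤ rhoW n l := by
  induction l with
  | zero => simp [rhoW]
  | succ l ih =>
    rcases le_or_gt l n with h | h
    · rw [rhoW]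
      have : (l : ℝ) ≤ n := by exact_mod_cast h
      have : 0 ≤ (n : ℝ) - l := by linarith
      positivity
    · obtain ⟨k, rfl⟩ := Nat.exists_eq_add_of_lt h
      have := rhoW_zero_of n (k + 1)
      rw [show n + k + 1 + 1 = n + 1 + (k + 1) by ring, this]

lemma rhoW_anti (n l : ℕ) : rhoW n (l + 1) ≤ rhoW n l := by
  have h := rhoW_succ n l
  have h0 := rhoW_nonneg n l
  have hp : (0 : ℝ) < (n : ℝ) + l + 2 := by positivity
  by_contra! hc
  have : rhoW n l * ((n : ℝ) + l + 2) < rhoW n (l + 1) * ((n : ℝ) + l + 2) :=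
    mul_lt_mul_of_pos_right hc hp
  have hl : (0 : ℝ) ≤ l := Nat.cast_nonneg l
  nlinarith

lemma rhoW_step (n l : ℕ) :
    rhoW (n + 1) l * (((n : ℝ) + 1 - l) * ((n : ℝ) + l + 2))
      = ((n : ℝ) + 1) * ((n : ℝ) + 2) * rhoW n l := by
  induction l with
  | zero => simp [rhoW]
  | succ l ih =>
    have h1 := rhoW_succ (n + 1) l
    have h2 := rhoW_succ n l
    have hp : ((n : ℝ) + l + 2) ≠ 0 := by positivity
    push_cast at h1 ⊢
    apply mul_right_cancel₀ hp
    linear_combination (((n : ℝ) - l) * ((n : ℝ) + l + 2)) * h1 + ((n : ℝ) - l) * ih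
      - ((n : ℝ) + 1) * ((n : ℝ) + 2) * h2

lemma rhoW_tendsto (l : ℕ) : Tendsto (fun n => rhoW n l) atTop (𝓝 1) := by
  induction l with
  | zero => simp [rhoW]
  | succ l ih =>
    have h : Tendsto (fun n : ℕ => ((n : ℝ) - l) / ((n : ℝ) + l + 2)) atTop (𝓝 1) := by
      have h1 : Tendsto (fun n : ℕ => 1 - (2 * (l : ℝ) + 2) / ((n : ℝ) + l + 2)) atTop
          (𝓝 (1 - 0)) := by
        refine Tendsto.sub tendsto_const_nhds (Tendsto.div_atTop tendsto_const_nhds ?_)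
        exact tendsto_atTop_add_const_right _ _
          (tendsto_atTop_add_const_right _ _ tendsto_natCast_atTop_atTop)
      rw [sub_zero] at h1
      refine h1.congr fun n => ?_
      have hp : ((n : ℝ) + l + 2) ≠ 0 := by positivity
      field_simp; ring
    have := ih.mul h
    rw [one_mul] at this
    refine this.congr fun n => ?_
    rw [rhoW, mul_div_assoc]

lemma bonnet (y : ℝ) (n : ℕ) : ((n : ℝ) + 2) * legendreP (n + 2) y
    = (2 * (n : ℝ) + 3) * y * legendreP (n + 1) y - ((n : ℝ) + 1) * legendreP n y := by
  have : ((n : ℝ) + 2) ≠ 0 := by positivity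
  rw [legendreP]; field_simp

lemma rhoW_coeff (n l : ℕ) :
    2 * ((n : ℝ) + 1) * (2 * (l : ℝ) + 3) * rhoW (n + 1) (l + 1) = ((n : ℝ) + 2) *
      ((2 * (l : ℝ) + 3) * rhoW n (l + 1) + ((l : ℝ) + 1) * rhoW n l
        + ((l : ℝ) + 2) * rhoW n (l + 2)) := by
  have h1 := rhoW_succ (n + 1) l
  have h2 := rhoW_succ n l
  have h3 := rhoW_succ n (l + 1)
  have h4 := rhoW_step n l
  have hp : ((n : ℝ) + l + 2) ≠ 0 := by positivity
  have hp' : ((n : ℝ) + l + 3) ≠ 0 := by positivity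
  push_cast at h1 h3
  have e1 : rhoW n (l + 1) = rhoW n l * ((n : ℝ) - l) / ((n : ℝ) + l + 2) := by
    field_simp; linarith
  have e3 : rhoW n (l + 2) = rhoW n (l + 1) * ((n : ℝ) - l - 1) / ((n : ℝ) + l + 3) := by
    field_simp; linarith
  have e2 : rhoW (n + 1) (l + 1) = rhoW n l * ((n : ℝ) + 1) * ((n : ℝ) + 2)
      / (((n : ℝ) + l + 2) * ((n : ℝ) + l + 3)) := by
    field_simp
    linear_combination ((n : ℝ) + l + 2) * h1 + h4
  rw [e3, e1, e2]
  field_simp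
  ring

lemma moment_aux (y : ℝ) (n N : ℕ) :
    2 * ((n : ℝ) + 1) * ∑ l ∈ Finset.range (N + 1),
        (2 * (l : ℝ) + 1) * rhoW (n + 1) l * legendreP l y
      = ((n : ℝ) + 2) * ((1 + y) * ∑ l ∈ Finset.range (N + 1),
        (2 * (l : ℝ) + 1) * rhoW n l * legendreP l y
      + ((N : ℝ) + 1) * (rhoW n (N + 1) * legendreP N y - rhoW n N * legendreP (N + 1) y)) := by
  induction N with
  | zero =>
    have hp : ((n : ℝ) + 2) ≠ 0 := by positivity
    simp [rhoW, legendreP]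
    field_simp
    ring
  | succ N ih =>
    rw [Finset.sum_range_succ, Finset.sum_range_succ _ (N + 1), mul_add, ih]
    have h1 := rhoW_coeff n N
    have h2 := bonnet y N
    push_cast
    linear_combination legendreP (N + 1) y * h1 + ((n : ℝ) + 2) * rhoW n (N + 1) * h2

lemma moment (y : ℝ) (n : ℕ) :
    ∑ l ∈ Finset.range (n + 1), (2 * (l : ℝ) + 1) * rhoW n l * legendreP l y
      = ((n : ℝ) + 1) * ((1 + y) / 2) ^ n := by
  induction n with
  | zero => simp [rhoW, legendreP]
  | succ n ih =>
    have h := moment_aux y n (n + 1)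
    have z1 : rhoW n (n + 1) = 0 := rhoW_zero_of n 0
    have z2 : rhoW n (n + 1 + 1) = 0 := rhoW_zero_of n 1
    rw [Finset.sum_range_succ (fun l : ℕ => (2 * (l : ℝ) + 1) * rhoW n l * legendreP l y) (n + 1),
      ih, z1, z2] at h
    have hp : 2 * ((n : ℝ) + 1) ≠ 0 := by positivity
    apply mul_left_cancel₀ hp
    rw [h]
    push_cast
    ring

lemma dW_pos (w : ℝ) (hw : 0 < w) (n : ℕ) : 0 < dW w n := by
  induction n with
  | zero => simpa [dW]
  | succ n ih => rw [dW]; positivity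

lemma dW_le (w : ℝ) (hw : 0 < w) (n : ℕ) :
    dW w n ≤ w * Real.exp (w * (1 - 1 / ((n : ℝ) + 1))) := by
  induction n with
  | zero => simp [dW]
  | succ n ih =>
    rw [dW]
    have h1 : 1 + w / (((n : ℝ) + 1) * ((n : ℝ) + 2))
        ≤ Real.exp (w / (((n : ℝ) + 1) * ((n : ℝ) + 2))) := by
      rw [add_comm]; exact Real.add_one_le_exp _
    calc _ ≤ w * Real.exp (w * (1 - 1 / ((n : ℝ) + 1))) *
          Real.exp (w / (((n : ℝ) + 1) * ((n : ℝ) + 2))) := by gcongr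
      _ = _ := by
        rw [mul_assoc, ← Real.exp_add]
        congr 2
        push_cast
        field_simp
        ring

/-- The terms. -/
noncomputable def tW (w y : ℝ) (l : ℕ) : ℝ :=
  (2 * (l : ℝ) + 1) * legendreP l y / ((l : ℝ) * ((l : ℝ) + 1) + w)

lemma sigma_ge (w y : ℝ) (hw : 0 < w) (hy : -1 ≤ y) (n : ℕ) :
    1 ≤ dW w n * ∑ l ∈ Finset.range (n + 1), rhoW n l * tW w y l := by
  induction n with
  | zero => simp [dW, rhoW, tW, legendreP, hw.ne']
  | succ n ih =>
    have z1 : rhoW n (n + 1) = 0 := rhoW_zero_of n 0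
    have e : ∑ l ∈ Finset.range (n + 1), rhoW n l * tW w y l
        = ∑ l ∈ Finset.range (n + 1 + 1), rhoW n l * tW w y l := by
      rw [Finset.sum_range_succ _ (n + 1), z1]; simp
    have key : dW w (n + 1) * ∑ l ∈ Finset.range (n + 1 + 1), rhoW (n + 1) l * tW w y l
        = dW w n * ∑ l ∈ Finset.range (n + 1), rhoW n l * tW w y l
          + dW w n / (((n : ℝ) + 1) * ((n : ℝ) + 2)) *
            ∑ l ∈ Finset.range (n + 1 + 1), (2 * (l : ℝ) + 1) * rhoW (n + 1) l * legendreP l y := by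
      rw [e, Finset.mul_sum, Finset.mul_sum, Finset.mul_sum, ← Finset.sum_add_distrib]
      refine Finset.sum_congr rfl fun l _ => ?_
      have h := rhoW_step n l
      have hr : rhoW n l = rhoW (n + 1) l * (((n : ℝ) + 1 - l) * ((n : ℝ) + l + 2))
          / (((n : ℝ) + 1) * ((n : ℝ) + 2)) := by
        field_simp; linarith
      have hq : ((l : ℝ) * ((l : ℝ) + 1) + w) ≠ 0 := by positivity
      rw [hr, dW, tW]
      field_simp
      ring
    rw [key, moment]
    have := dW_pos w hw n
    have hz : 0 ≤ (1 + y) / 2 := by linarith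
    have : 0 ≤ dW w n / (((n : ℝ) + 1) * ((n : ℝ) + 2)) *
      ((((n + 1 : ℕ) : ℝ) + 1) * ((1 + y) / 2) ^ (n + 1)) := by positivity
    linarith

lemma legendre_energy (y : ℝ) (n : ℕ) :
    legendreP n y ^ 2 - 2 * y * legendreP n y * legendreP (n + 1) y + legendreP (n + 1) y ^ 2
      ≤ 1 - y ^ 2 := by
  induction n with
  | zero => simp [legendreP]; nlinarith
  | succ n ih =>
    have h := bonnet y n
    have hp : (0 : ℝ) < (n : ℝ) + 2 := by positivity
    have hn : (0 : ℝ) ≤ (n : ℝ) := by positivity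
    set a := legendreP n y
    set b := legendreP (n + 1) y
    obtain ⟨δ, hδ⟩ : ∃ δ, δ = (y * b - a) / ((n : ℝ) + 2) := ⟨_, rfl⟩
    have hd : δ * ((n : ℝ) + 2) = y * b - a := by rw [hδ]; field_simp
    have hc : legendreP (n + 1 + 1) y = 2 * y * b - a - δ := by
      apply mul_left_cancel₀ hp.ne'
      linear_combination h + hd
    rw [hc]
    have : b ^ 2 - 2 * y * b * (2 * y * b - a - δ) + (2 * y * b - a - δ) ^ 2
        = a ^ 2 - 2 * y * a * b + b ^ 2 - δ ^ 2 * (2 * (n : ℝ) + 3) := by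
      linear_combination 2 * δ * hd
    rw [this]
    have : 0 ≤ δ ^ 2 * (2 * (n : ℝ) + 3) := by positivity
    linarith

lemma legendre_neg_one (n : ℕ) :
    legendreP n (-1) = (-1) ^ n ∧ legendreP (n + 1) (-1) = (-1) ^ (n + 1) := by
  induction n with
  | zero => simp [legendreP]
  | succ n ih =>
    refine ⟨ih.2, ?_⟩
    have h := bonnet (-1) n
    rw [ih.1, ih.2] at h
    have hp : (0 : ℝ) < (n : ℝ) + 2 := by positivity
    apply mul_left_cancel₀ hp.ne'
    rw [h]; ring

lemma legendre_abs_le (y : ℝ) (hy : -1 ≤ y) (hy' : y < 1) (n : ℕ) : |legendreP n y| ≤ 1 := by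
  rcases hy.eq_or_lt with rfl | h
  · rw [(legendre_neg_one n).1]; simp
  · have e := legendre_energy y n
    have hpos : 0 < 1 - y ^ 2 := by nlinarith
    rw [← sq_le_one_iff_abs_le_one]
    have := sq_nonneg (legendreP (n + 1) y - y * legendreP n y)
    have : (1 - y ^ 2) * legendreP n y ^ 2 ≤ (1 - y ^ 2) * 1 := by nlinarith
    exact le_of_mul_le_mul_left this hpos

lemma christoffel (y : ℝ) (n : ℕ) :
    (1 - y) * ∑ l ∈ Finset.range (n + 1), (2 * (l : ℝ) + 1) * legendreP l y
      = ((n : ℝ) + 1) * (legendreP n y - legendreP (n + 1) y) := by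
  induction n with
  | zero => simp [legendreP]
  | succ n ih =>
    rw [Finset.sum_range_succ, mul_add, ih]
    have := bonnet y n
    push_cast
    linear_combination this

lemma christoffel_bound (y : ℝ) (hy : -1 ≤ y) (hy' : y < 1) (n : ℕ) :
    |∑ l ∈ Finset.range (n + 1), (2 * (l : ℝ) + 1) * legendreP l y|
      ≤ 2 / (1 - y) * ((n : ℝ) + 1) := by
  have h := christoffel y n
  have hp : 0 < 1 - y := by linarith
  have e : ∑ l ∈ Finset.range (n + 1), (2 * (l : ℝ) + 1) * legendreP l y
      = ((n : ℝ) + 1) * (legendreP n y - legendreP (n + 1) y) / (1 - y) := by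
    field_simp; linarith
  have h1 := abs_le.1 (legendre_abs_le y hy hy' n)
  have h2 := abs_le.1 (legendre_abs_le y hy hy' (n + 1))
  have h3 : |legendreP n y - legendreP (n + 1) y| ≤ 2 := abs_le.2 ⟨by linarith, by linarith⟩
  have hn : (0 : ℝ) < (n : ℝ) + 1 := by positivity
  rw [e, abs_div, abs_mul, abs_of_pos hp, abs_of_pos hn]
  rw [div_mul_eq_mul_div, mul_comm 2]
  gcongr

lemma abel_parts (a b : ℕ → ℝ) (N : ℕ) :
    ∑ l ∈ Finset.range (N + 1), a l * b l
      = (∑ l ∈ Finset.range (N + 1), a l) * b N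
        + ∑ k ∈ Finset.range N, (∑ l ∈ Finset.range (k + 1), a l) * (b k - b (k + 1)) := by
  induction N with
  | zero => simp
  | succ N ih =>
    rw [Finset.sum_range_succ, ih, Finset.sum_range_succ a (N + 1),
      Finset.sum_range_succ (fun k => (∑ l ∈ Finset.range (k + 1), a l) * (b k - b (k + 1))) N]
    ring

lemma series_conv (w y : ℝ) (hw : 1 / 4 < w) (hy : -1 ≤ y) (hy' : y < 1) :
    ∃ S, Tendsto (fun N : ℕ => ∑ l ∈ Finset.range N, tW w y l) atTop (𝓝 S) := by
  have hp : 0 < 1 - y := by linarith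
  set a : ℕ → ℝ := fun l => (2 * (l : ℝ) + 1) * legendreP l y with ha
  set b : ℕ → ℝ := fun l => 1 / ((l : ℝ) * ((l : ℝ) + 1) + w) with hb
  have hA : ∀ n : ℕ, |∑ l ∈ Finset.range (n + 1), a l| ≤ 2 / (1 - y) * ((n : ℝ) + 1) :=
    christoffel_bound y hy hy'
  have hq : ∀ l : ℕ, ((l : ℝ) + 1) ^ 2 / 4 ≤ (l : ℝ) * ((l : ℝ) + 1) + w := by
    intro l
    have hl : (0 : ℝ) ≤ l := by positivity
    nlinarith
  have hq0 : ∀ l : ℕ, 0 < (l : ℝ) * ((l : ℝ) + 1) + w := by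
    intro l
    positivity
  have hbl : ∀ l : ℕ, b l ≤ 4 / ((l : ℝ) + 1) ^ 2 := by
    intro l
    have : b l ≤ 1 / (((l : ℝ) + 1) ^ 2 / 4) := by
      simp only [hb]
      exact one_div_le_one_div_of_le (by positivity) (hq l)
    refine this.trans_eq (by field_simp)
  have hb0 : ∀ l : ℕ, 0 ≤ b l := fun l => (one_div_pos.2 (hq0 l)).le
  have hdiff : ∀ l : ℕ, b l - b (l + 1) = 2 * ((l : ℝ) + 1) * b l * b (l + 1) := by
    intro l
    have h1 := (hq0 l).ne'
    have h2 := (hq0 (l + 1)).ne'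
    simp only [hb]
    field_simp
    push_cast
    ring
  have T1 : Tendsto (fun N : ℕ => (∑ l ∈ Finset.range (N + 1), a l) * b N) atTop (𝓝 0) := by
    have hz : Tendsto (fun N : ℕ => (8 / (1 - y)) * (1 / ((N : ℝ) + 1))) atTop (𝓝 0) := by
      simpa using (tendsto_one_div_add_atTop_nhds_zero_nat (𝕜 := ℝ)).const_mul (8 / (1 - y))
    refine squeeze_zero_norm (fun N => ?_) hz
    rw [Real.norm_eq_abs, abs_mul, abs_of_nonneg (hb0 N)]
    calc _ ≤ 2 / (1 - y) * ((N : ℝ) + 1) * (4 / ((N : ℝ) + 1) ^ 2) := by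
          gcongr
          · exact hA N
          · exact hbl N
      _ = _ := by field_simp; norm_num
  have T2 : Summable (fun k : ℕ => (∑ l ∈ Finset.range (k + 1), a l) * (b k - b (k + 1))) := by
    have hs : Summable (fun k : ℕ => (64 / (1 - y)) * (1 / (((k + 1 : ℕ) : ℝ)) ^ 2)) :=
      (((summable_nat_add_iff 1).2
        (Real.summable_one_div_nat_pow.2 (by norm_num : 1 < 2)))).mul_left _
    refine Summable.of_norm_bounded hs fun k => ?_
    rw [hdiff, Real.norm_eq_abs, abs_mul,
      abs_of_nonneg (by have := hb0 k; have := hb0 (k + 1); positivity :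
        0 ≤ 2 * ((k : ℝ) + 1) * b k * b (k + 1))]
    have hb1 : b (k + 1) ≤ 4 / ((k : ℝ) + 1) ^ 2 := by
      refine (hbl (k + 1)).trans ?_
      push_cast
      gcongr
      linarith
    calc _ ≤ 2 / (1 - y) * ((k : ℝ) + 1) * (2 * ((k : ℝ) + 1) * (4 / ((k : ℝ) + 1) ^ 2) *
          (4 / ((k : ℝ) + 1) ^ 2)) := by
          have := hb0 k
          have := hb0 (k + 1)
          gcongr
          · exact hA k
          · exact hbl k
      _ = _ := by push_cast; field_simp; norm_num
  refine ⟨0 + ∑' k : ℕ, (∑ l ∈ Finset.range (k + 1), a l) * (b k - b (k + 1)),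
    (tendsto_add_atTop_iff_nat 1).1 ?_⟩
  refine (T1.add T2.hasSum.tendsto_sum_nat).congr fun N => ?_
  rw [← abel_parts]
  refine Finset.sum_congr rfl fun l _ => ?_
  simp only [ha, hb, tW]
  ring

lemma toeplitz (t : ℕ → ℝ) (S : ℝ)
    (h : Tendsto (fun N : ℕ => ∑ l ∈ Finset.range N, t l) atTop (𝓝 S)) :
    Tendsto (fun n : ℕ => ∑ l ∈ Finset.range (n + 1), rhoW n l * t l) atTop (𝓝 S) := by
  have tele : ∀ n L : ℕ, ∑ k ∈ Finset.range L, (rhoW n k - rhoW n (k + 1)) = 1 - rhoW n L := by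
    intro n L
    rw [Finset.sum_range_sub', rhoW]
  have e : ∀ n : ℕ, ∑ l ∈ Finset.range (n + 1), rhoW n l * t l - S
      = ∑ k ∈ Finset.range (n + 1), (rhoW n k - rhoW n (k + 1)) *
        (∑ l ∈ Finset.range (k + 1), t l - S) := by
    intro n
    have z1 : rhoW n (n + 1) = 0 := rhoW_zero_of n 0
    have h1 := abel_parts t (rhoW n) n
    have h2 := tele n (n + 1)
    rw [z1, sub_zero] at h2
    have h3 : ∑ l ∈ Finset.range (n + 1), rhoW n l * t l
        = ∑ l ∈ Finset.range (n + 1), t l * rhoW n l :=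
      Finset.sum_congr rfl fun l _ => mul_comm _ _
    have h4 : ∑ k ∈ Finset.range (n + 1), (rhoW n k - rhoW n (k + 1)) *
        (∑ l ∈ Finset.range (k + 1), t l - S)
        = ∑ k ∈ Finset.range (n + 1), (∑ l ∈ Finset.range (k + 1), t l) *
          (rhoW n k - rhoW n (k + 1))
          - (∑ k ∈ Finset.range (n + 1), (rhoW n k - rhoW n (k + 1))) * S := by
      rw [Finset.sum_mul, ← Finset.sum_sub_distrib]
      exact Finset.sum_congr rfl fun l _ => by ring
    rw [h3, h4, h2, h1, Finset.sum_range_succ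
      (fun k => (∑ l ∈ Finset.range (k + 1), t l) * (rhoW n k - rhoW n (k + 1))) n, z1]
    ring
  rw [← tendsto_sub_nhds_zero_iff, Metric.tendsto_atTop]
  intro ε hε
  obtain ⟨L, hL⟩ := Metric.tendsto_atTop.1 h (ε / 2) (by positivity)
  have hf : Tendsto (fun n : ℕ => ∑ k ∈ Finset.range L, (rhoW n k - rhoW n (k + 1)) *
      |∑ l ∈ Finset.range (k + 1), t l - S|) atTop (𝓝 0) := by
    have : Tendsto (fun n : ℕ => ∑ k ∈ Finset.range L, (rhoW n k - rhoW n (k + 1)) *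
      |∑ l ∈ Finset.range (k + 1), t l - S|) atTop (𝓝 (∑ k ∈ Finset.range L, (1 - 1) *
      |∑ l ∈ Finset.range (k + 1), t l - S|)) :=
      tendsto_finsetSum _ fun k _ =>
        ((rhoW_tendsto k).sub (rhoW_tendsto (k + 1))).mul_const _
    simpa using this
  obtain ⟨M, hM⟩ := Metric.tendsto_atTop.1 hf (ε / 2) (by positivity)
  refine ⟨max M L, fun n hn => ?_⟩
  have hnM := hM n (le_of_max_le_left hn)
  have hnL : L ≤ n + 1 := (le_of_max_le_right hn).trans (Nat.le_succ n)
  rw [Real.dist_eq, sub_zero] at hnM ⊢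
  rw [e]
  have hd : ∀ k, 0 ≤ rhoW n k - rhoW n (k + 1) := fun k => sub_nonneg.2 (rhoW_anti n k)
  have b1 := (abs_lt.1 hnM).2
  have b2 : ∑ k ∈ Finset.Ico L (n + 1), (rhoW n k - rhoW n (k + 1)) *
      |∑ l ∈ Finset.range (k + 1), t l - S| ≤ ε / 2 := by
    calc _ ≤ ∑ k ∈ Finset.Ico L (n + 1), (rhoW n k - rhoW n (k + 1)) * (ε / 2) := by
          refine Finset.sum_le_sum fun k hk => mul_le_mul_of_nonneg_left ?_ (hd k)
          have := hL (k + 1) ((Finset.mem_Ico.1 hk).1.trans (Nat.le_succ k))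
          rw [Real.dist_eq] at this
          exact this.le
      _ ≤ ∑ k ∈ Finset.range (n + 1), (rhoW n k - rhoW n (k + 1)) * (ε / 2) := by
          refine Finset.sum_le_sum_of_subset_of_nonneg ?_ fun k _ _ =>
            mul_nonneg (hd k) (by positivity)
          intro k hk
          exact Finset.mem_range.2 (Finset.mem_Ico.1 hk).2
      _ ≤ ε / 2 := by
          rw [← Finset.sum_mul, tele]
          have := rhoW_nonneg n (n + 1)
          nlinarith
  calc _ ≤ ∑ k ∈ Finset.range (n + 1), (rhoW n k - rhoW n (k + 1)) *
        |∑ l ∈ Finset.range (k + 1), t l - S| := by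
        refine (Finset.abs_sum_le_sum_abs _ _).trans_eq (Finset.sum_congr rfl fun k _ => ?_)
        rw [abs_mul, abs_of_nonneg (hd k)]
    _ = _ := (Finset.sum_range_add_sum_Ico _ hnL).symm
    _ < ε := by linarith

/-- For `w > 1/4` and `-1 ≤ y < 1`, the sum of the series
`∑ (2l+1) P l y / (l(l+1)+w)` is strictly positive (equivalently, the Green's function
of the screened Poisson equation on the sphere is strictly negative for `0 < γ ≤ π`). -/
theorem screened_series_positive (w : ℝ) (hw : 1 / 4 < w) (y : ℝ)
    (hy₁ : -1 ≤ y) (hy₂ : y < 1) :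
    ∃ S : ℝ, Tendsto (fun N : ℕ => ∑ l ∈ Finset.range N,
      (2 * (l : ℝ) + 1) * legendreP l y / ((l : ℝ) * ((l : ℝ) + 1) + w)) atTop (𝓝 S) ∧
      0 < S := by
  obtain ⟨S, hS⟩ := series_conv w y hw hy₁ hy₂
  refine ⟨S, hS, ?_⟩
  have hw0 : 0 < w := by linarith
  have hc : 0 < 1 / (w * Real.exp w) := by positivity
  refine hc.trans_le (ge_of_tendsto' (toeplitz _ S hS) fun n => ?_)
  have h1 := sigma_ge w y hw0 hy₁ n
  have h2 := dW_pos w hw0 n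
  have h3 : dW w n ≤ w * Real.exp w := by
    refine (dW_le w hw0 n).trans ?_
    have : 0 ≤ 1 / ((n : ℝ) + 1) := by positivity
    gcongr
    nlinarith
  calc 1 / (w * Real.exp w) ≤ 1 / dW w n := one_div_le_one_div_of_le h2 h3
    _ ≤ _ := by rw [div_le_iff₀ h2]; linarith
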